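/- arXiv:1504.04875 — 2 statements merged into one kernel-verified Lean document; each statement's English description precedes it below -/
import Mathlib

section
/- Let R be a locally stable commutative ring. Then R is an elementary divisor ring if and only if R is a Bézout ring. -/
open Matrix

/-- A commutative ring `T` has stable range 1: whenever `cT + dT = T`,
there exists `y` with `c + d*y` a unit. -/
def StableRange1 (T : Type) [CommRing T] : Prop :=
  ∀ c d : T, IsCoprime c d → ∃ y : T, IsUnit (c + d * y)

/-- The multiplicative set `S_a = { b | aR + bR = R }`. -/
def Sa (R : Type) [CommRing R] (a : R) : Submonoid R where
  carrier := {x | IsCoprime a x}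
  one_mem' := isCoprime_one_right
  mul_mem' := fun hb hc => IsCoprime.mul_right hb hc

/-- `R` is locally stable: whenever `aR + bR = R` there is `y` such that
`R/(a+by)R` has stable range 1. -/
def LocallyStable (R : Type) [CommRing R] : Prop :=
  ∀ a b : R, IsCoprime a b → ∃ y : R,
    StableRange1 (R ⧸ Ideal.span ({a + b * y} : Set R))

/-- `c` is an adequate element. -/
def Adequate {R : Type} [CommRing R] (c : R) : Prop :=
  ∀ a : R, ∃ r s : R, c = r * s ∧ IsCoprime r a ∧
    ∀ s' : R, s' ∣ s → ¬ IsUnit s' → ¬ IsCoprime s' a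

/-- A ring is clean if every element is the sum of an idempotent and a unit. -/
def IsCleanRing (T : Type) [CommRing T] : Prop :=
  ∀ x : T, ∃ e u : T, IsIdempotentElem e ∧ IsUnit u ∧ x = e + u

/-- A ring is VNL if for every `x`, `x` or `1 - x` is von Neumann regular. -/
def IsVNLRing (T : Type) [CommRing T] : Prop :=
  ∀ x : T, (∃ y : T, x = x * y * x) ∨ (∃ y : T, (1 - x) = (1 - x) * y * (1 - x))

/-- `R` has almost stable range 1: every proper homomorphic image has stable range 1. -/
def AlmostStableRange1 (R : Type) [CommRing R] : Prop :=
  ∀ I : Ideal R, I ≠ ⊥ → StableRange1 (R ⧸ I)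

/-- `R` has adequate range 1. -/
def AdequateRange1 (R : Type) [CommRing R] : Prop :=
  ∀ a b : R, IsCoprime a b → ∃ y : R, Adequate (a + b * y)

/-- A (rectangular) matrix admits diagonal reduction. -/
def DiagonalReduction {R : Type} [CommRing R] {m n : ℕ}
    (A : Matrix (Fin m) (Fin n) R) : Prop :=
  ∃ (P : Matrix (Fin m) (Fin m) R) (Q : Matrix (Fin n) (Fin n) R),
    IsUnit P ∧ IsUnit Q ∧
    (∀ (i : Fin m) (j : Fin n), (i : ℕ) ≠ (j : ℕ) → (P * A * Q) i j = 0) ∧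
    (∀ (i i' : Fin m) (j j' : Fin n), (i : ℕ) = (j : ℕ) → (i' : ℕ) = (j' : ℕ) →
      (i : ℕ) + 1 = (i' : ℕ) → (P * A * Q) i j ∣ (P * A * Q) i' j')

/-- `R` is an elementary divisor ring. -/
def ElementaryDivisorRing (R : Type) [CommRing R] : Prop :=
  ∀ (m n : ℕ) (A : Matrix (Fin m) (Fin n) R), DiagonalReduction A

/-- `GE n R` : the subgroup of `GL n R` generated by elementary matrices. -/
def GE (n : ℕ) (R : Type) [CommRing R] : Subgroup (GL (Fin n) R) :=
  Subgroup.closure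
    { M | ∃ t : Matrix.TransvectionStruct (Fin n) R,
        (M : Matrix (Fin n) (Fin n) R) = t.toMatrix }

namespace LS

variable {R : Type} [CommRing R]

/-- Element form of stable range one of `R / w`, passed to a divisor `g` of `w`. -/
lemma sr1_elem {w g : R} (hw : StableRange1 (R ⧸ Ideal.span ({w} : Set R))) (hg : g ∣ w)
    {c d : R} (hc : ∃ x y z : R, c * x + d * y + g * z = 1) :
    ∃ t : R, IsCoprime g (c + d * t) := by
  obtain ⟨x, y, z, hxyz⟩ := hc
  obtain ⟨k, rfl⟩ := hg
  set I := Ideal.span ({g * k} : Set R)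
  have h1 : IsCoprime (Ideal.Quotient.mk I c) (Ideal.Quotient.mk I (d * y + g * z)) := by
    refine ⟨Ideal.Quotient.mk I x, 1, ?_⟩
    rw [one_mul, ← map_mul, ← map_add, ← map_one (Ideal.Quotient.mk I), ← hxyz]
    congr 1; ring
  obtain ⟨t', ht⟩ := hw _ _ h1
  obtain ⟨t, rfl⟩ := Ideal.Quotient.mk_surjective t'
  obtain ⟨v', hv⟩ := isUnit_iff_exists_inv.1 ht
  obtain ⟨v, rfl⟩ := Ideal.Quotient.mk_surjective v'
  rw [← map_mul, ← map_add, ← map_mul, ← map_one (Ideal.Quotient.mk I), Ideal.Quotient.eq,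
    Ideal.mem_span_singleton] at hv
  obtain ⟨l, hl⟩ := hv
  refine ⟨y * t, z * t * v - k * l, v, ?_⟩
  linear_combination hl

lemma bezout_pair [IsBezout R] (a b : R) :
    ∃ d a' b' x y : R, a = d * a' ∧ b = d * b' ∧ d = a * x + b * y := by
  obtain ⟨d, hd⟩ := (IsBezout.span_pair_isPrincipal a b)
  have hd : Ideal.span {a, b} = Ideal.span {d} := hd
  have ha : a ∈ Ideal.span {d} := hd ▸ Ideal.subset_span (by simp)
  have hb : b ∈ Ideal.span {d} := hd ▸ Ideal.subset_span (by simp)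
  have hdd : d ∈ Ideal.span {a, b} := hd ▸ Ideal.mem_span_singleton_self d
  obtain ⟨a', ha'⟩ := Ideal.mem_span_singleton.1 ha
  obtain ⟨b', hb'⟩ := Ideal.mem_span_singleton.1 hb
  obtain ⟨x, y, hxy⟩ := Ideal.mem_span_pair.1 hdd
  exact ⟨d, a', b', x, y, ha', hb', by rw [← hxy]; ring⟩

/-- Stable range two. -/
lemma sr2 (h : LocallyStable R) [IsBezout R] {a b c : R}
    (habc : ∃ x y z : R, a * x + b * y + c * z = 1) :
    ∃ s t : R, IsCoprime (a + c * s) (b + c * t) := by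
  obtain ⟨x, y, z, hxyz⟩ := habc
  obtain ⟨d, b', c', u, v, hb, hc, hd⟩ := bezout_pair b c
  have h1 : IsCoprime a d := ⟨x, b' * y + c' * z, by
    linear_combination hxyz - y * hb - z * hc⟩
  obtain ⟨k, hk⟩ := h a d h1
  obtain ⟨t, ht⟩ := sr1_elem hk dvd_rfl (c := b) (d := c)
    ⟨y - x * k * u * 1 , z - x * k * v, x, by linear_combination hxyz + x * k * hd⟩
  refine ⟨v * k - t * u * k, t, ?_⟩
  obtain ⟨p, q, hpq⟩ := ht
  exact ⟨p, q + p * u * k, by linear_combination hpq - p * k * hd⟩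

/-- The Hermite property. -/
def Herm (R : Type) [CommRing R] : Prop :=
  ∀ a b : R, ∃ d a' b' x y : R, a = d * a' ∧ b = d * b' ∧ x * a' + y * b' = 1

lemma herm (h : LocallyStable R) [IsBezout R] : Herm R := by
  intro a b
  obtain ⟨d, a', b', x, y, ha, hb, hd⟩ := bezout_pair a b
  obtain ⟨s, t, p, q, hpq⟩ := sr2 h (a := a') (b := b') (c := 1 - a' * x - b' * y)
    ⟨x, y, 1, by ring⟩
  have h0 : d * (1 - a' * x - b' * y) = 0 := by
    linear_combination hd + x * ha + y * hb
  exact ⟨d, _, _, p, q, by linear_combination ha - s * h0,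
    by linear_combination hb - t * h0, hpq⟩

/-- Unimodular lower triangular matrices represent one. -/
lemma tri_uni (h : LocallyStable R) (H : Herm R) {a b c : R}
    (habc : ∃ x y z : R, a * x + b * y + c * z = 1) :
    ∃ p q x y : R, p * a * x + q * b * x + q * c * y = 1 := by
  obtain ⟨x, y, z, hxyz⟩ := habc
  obtain ⟨k, hk⟩ := h b (a * x + c * z) ⟨y, 1, by linear_combination hxyz⟩
  set w := b + (a * x + c * z) * k with hw
  obtain ⟨g, w', c', x1, y1, hw', hc', h1⟩ := H w c
  obtain ⟨t, r, l, ht⟩ := sr1_elem hk ⟨w', hw'⟩ (c := x1) (d := c')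
    ⟨w', y1, 0, by linear_combination h1⟩
  -- `a` is a unit modulo `g`
  have hag : IsCoprime g (a * (x1 + c' * t)) := by
    refine IsCoprime.mul_right ⟨w' * y + c' * (z - z * k * y), x - x * k * y, ?_⟩ ⟨r, l, ht⟩
    linear_combination hxyz + y * hw - y * hw' - (z - z * k * y) * hc'
  obtain ⟨q, p, hpq⟩ := hag
  -- vector `(x1 + c' t, y1 - w' t)` for the matrix `(a, 0; w, c)`
  refine ⟨p + q * x * k, q, x1 + c' * t, y1 - w' * t + z * k * (x1 + c' * t), ?_⟩
  have e1 : w * (x1 + c' * t) + c * (y1 - w' * t) = g := by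
    rw [hw', hc']; linear_combination g * h1
  linear_combination hpq + q * e1 + q * (x1 + c' * t) * hw

lemma two (h : LocallyStable R) (H : Herm R) (a b c e : R) :
    ∃ p q x y : R, (p * a * x + p * b * y + q * c * x + q * e * y) ∣ a ∧
      (p * a * x + p * b * y + q * c * x + q * e * y) ∣ e := by
  obtain ⟨g, a', b', x, y, ha, hb, h1⟩ := H a b
  obtain ⟨d1, m', n', x1, y1, hm, hn, h2⟩ := H (c * x + e * y) (e * a' - c * b')
  obtain ⟨d, g', d1', x2, y2, hg, hd1, h3⟩ := H g d1
  obtain ⟨p, q, s, t, hpq⟩ := tri_uni h H (a := g') (b := d1' * m') (c := d1' * n')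
    ⟨x2, y2 * x1, y2 * y1, by linear_combination h3 + y2 * d1' * h2⟩
  have hd : p * a * (x * s - b' * t) + p * b * (y * s + a' * t) + q * c * (x * s - b' * t)
      + q * e * (y * s + a' * t) = d := by
    rw [hd1] at hm hn
    linear_combination d * hpq + p * (x * s - b' * t) * ha + p * (y * s + a' * t) * hb
      + p * s * g * h1 + p * s * hg + q * s * hm + q * t * hn
  refine ⟨p, q, x * s - b' * t, y * s + a' * t, ?_, ?_⟩
  · rw [hd]; exact ⟨g' * a', by rw [ha, hg]; ring⟩
  · rw [hd]
    refine ⟨d1' * m' * b' + d1' * n' * x, ?_⟩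
    rw [hd1] at hm hn
    linear_combination b' * hm + x * hn - e * h1

lemma vals (h : LocallyStable R) (H : Herm R) {m n : ℕ} (A : Matrix (Fin m) (Fin n) R)
    (s : Finset (Fin m × Fin n)) :
    ∃ (u : Fin m → R) (v : Fin n → R), ∀ ij ∈ s, u ⬝ᵥ (A *ᵥ v) ∣ A ij.1 ij.2 := by
  classical
  induction s using Finset.induction_on with
  | empty => exact ⟨0, 0, by simp⟩
  | insert k s hk ih =>
    obtain ⟨u, v, huv⟩ := ih
    obtain ⟨p, q, x, y, h1, h2⟩ := two h H (u ⬝ᵥ (A *ᵥ v)) (u ⬝ᵥ (A *ᵥ Pi.single k.2 1))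
      (Pi.single k.1 1 ⬝ᵥ (A *ᵥ v)) (Pi.single k.1 1 ⬝ᵥ (A *ᵥ Pi.single k.2 1))
    refine ⟨p • u + q • Pi.single k.1 1, x • v + y • Pi.single k.2 1, ?_⟩
    have e : (p • u + q • Pi.single k.1 1) ⬝ᵥ (A *ᵥ (x • v + y • Pi.single k.2 1)) =
       p * (u ⬝ᵥ (A *ᵥ v)) * x + p * (u ⬝ᵥ (A *ᵥ Pi.single k.2 1)) * y +
      q * (Pi.single k.1 1 ⬝ᵥ (A *ᵥ v)) * x +
      q * (Pi.single k.1 1 ⬝ᵥ (A *ᵥ Pi.single k.2 1)) * y := by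
      simp only [add_dotProduct, smul_dotProduct, mulVec_add, mulVec_smul, dotProduct_add,
        dotProduct_smul, smul_eq_mul]
      ring
    rw [e]
    intro ij hij
    rcases Finset.mem_insert.1 hij with rfl | hij
    · refine h2.trans ?_
      simp
    · exact h1.trans (huv ij hij)

/-- factoring out the gcd of a nonempty finite family -/
lemma factor (H : Herm R) {ι : Type} (f : ι → R) (s : Finset ι) (hs : s.Nonempty) :
    ∃ (d : R) (g x : ι → R), (∀ i ∈ s, f i = d * g i) ∧ ∑ i ∈ s, x i * g i = 1 := by
  classical
  induction hs using Finset.Nonempty.cons_induction with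
  | singleton a => exact ⟨f a, 1, 1, by simp, by simp⟩
  | cons a s ha hs ih =>
    obtain ⟨d, g, x, h1, h2⟩ := ih
    obtain ⟨d', a', b', x', y', e1, e2, e3⟩ := H (f a) d
    have hne : ∀ i ∈ s, i ≠ a := fun i hi hia => ha (hia ▸ hi)
    refine ⟨d', fun i => if i = a then a' else b' * g i,
      fun i => if i = a then x' else y' * x i, ?_, ?_⟩
    · intro i hi
      rcases Finset.mem_cons.1 hi with rfl | hi
      · simp [e1]
      · beta_reduce
        rw [if_neg (hne i hi), h1 i hi, e2]; ring
    · rw [Finset.sum_cons]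
      have : ∑ i ∈ s, (if i = a then x' else y' * x i) * (if i = a then a' else b' * g i)
          = y' * b' * ∑ i ∈ s, x i * g i := by
        rw [Finset.mul_sum]
        refine Finset.sum_congr rfl fun i hi => ?_
        rw [if_neg (hne i hi), if_neg (hne i hi)]; ring
      rw [this, h2]; simp [e3]

/-- rotation in two coordinates -/
def rotFun {ι : Type} [DecidableEq ι] (i j : ι) (α β γ δ : R) : (ι → R) →ₗ[R] (ι → R) where
  toFun f := fun k => if k = i then α * f i + β * f j else if k = j then γ * f i + δ * f j else f k
  map_add' f g := by
    ext k; simp only [Pi.add_apply]; split_ifs <;> ring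
  map_smul' r f := by
    ext k; simp only [Pi.smul_apply, smul_eq_mul, RingHom.id_apply]; split_ifs <;> ring

lemma rot_comp {ι : Type} [DecidableEq ι] {i j : ι} (hij : j ≠ i) {α β γ δ : R}
    (hd : α * δ - β * γ = 1) :
    rotFun i j δ (-β) (-γ) α ∘ₗ rotFun i j α β γ δ = LinearMap.id := by
  refine LinearMap.ext fun f => funext fun k => ?_
  simp only [rotFun, LinearMap.comp_apply, LinearMap.coe_mk, AddHom.coe_mk, LinearMap.id_apply,
    if_true, if_neg hij]
  split_ifs with h1 h2
  · subst h1; linear_combination f k * hd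
  · subst h2; linear_combination f k * hd
  · rfl

def rot {ι : Type} [DecidableEq ι] {i j : ι} (hij : j ≠ i) {α β γ δ : R}
    (hd : α * δ - β * γ = 1) : (ι → R) ≃ₗ[R] (ι → R) :=
  LinearEquiv.ofLinearMap (rotFun i j α β γ δ) (rotFun i j δ (-β) (-γ) α)
    (by
      have := rot_comp hij (α := δ) (β := -β) (γ := -γ) (δ := α) (by linear_combination hd)
      simpa only [neg_neg] using this)
    (rot_comp hij hd)

lemma clear (H : Herm R) {ι : Type} [DecidableEq ι] (i : ι) (w : ι → R) (s : Finset ι)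
    (hs : i ∉ s) : ∃ e : (ι → R) ≃ₗ[R] (ι → R), ∀ j ∈ s, e w j = 0 := by
  induction s using Finset.induction_on with
  | empty => exact ⟨LinearEquiv.refl R _, by simp⟩
  | insert k s hk ih =>
    have hki : k ≠ i := fun h => hs (by simp [h])
    obtain ⟨e, he⟩ := ih (fun h => hs (Finset.mem_insert_of_mem h))
    obtain ⟨d, a', b', x, y, h1, h2, h3⟩ := H (e w i) (e w k)
    refine ⟨e.trans (rot hki (α := x) (β := y) (γ := -b') (δ := a')
      (by linear_combination h3)), ?_⟩
    intro j hj
    have hji : j ≠ i := fun h => hs (h ▸ hj)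
    change (if j = i then _ else if j = k then -b' * e w i + a' * e w k else e w j) = 0
    rw [if_neg hji]
    split_ifs with hjk
    · rw [h1, h2]; ring
    · exact he j ((Finset.mem_insert.1 hj).resolve_left hjk)

lemma complete (H : Herm R) {n : ℕ} (w u : Fin (n + 1) → R) (huw : u ⬝ᵥ w = 1) :
    ∃ P : Matrix (Fin (n + 1)) (Fin (n + 1)) R, IsUnit P ∧ P *ᵥ w = Pi.single 0 1 := by
  obtain ⟨e, he⟩ := clear H (0 : Fin (n + 1)) w (Finset.univ.erase 0) (by simp)
  have hw : e w = Pi.single 0 (e w 0) := by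
    ext j
    by_cases hj : j = 0
    · subst hj; simp
    · rw [he j (by simp [hj]), Pi.single_eq_of_ne hj]
  set d := e w 0 with hd
  have h1 : w = d • e.symm (Pi.single 0 1) := by
    rw [← map_smul, ← Pi.single_smul, smul_eq_mul, mul_one, ← hw, e.symm_apply_apply]
  set c := u ⬝ᵥ e.symm (Pi.single 0 1) with hc
  have h2 : d * c = 1 := by
    rw [← huw, h1, dotProduct_smul, smul_eq_mul]
  have h3 : IsUnit (LinearMap.toMatrix' (e : (Fin (n + 1) → R) →ₗ[R] (Fin (n + 1) → R))) := by
    refine IsUnit.of_mul_eq_one (LinearMap.toMatrix' (e.symm : (Fin (n + 1) → R) →ₗ[R] (Fin (n + 1) → R))) ?_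
    rw [← LinearMap.toMatrix'_comp, LinearEquiv.comp_coe]
    simp
  have hcu : IsUnit c := IsUnit.of_mul_eq_one d (by rw [mul_comm]; exact h2)
  refine ⟨c • LinearMap.toMatrix' (e : (Fin (n + 1) → R) →ₗ[R] (Fin (n + 1) → R)), ?_, ?_⟩
  · obtain ⟨cu, hcu⟩ := hcu
    rw [← hcu]
    exact h3.smul cu
  · rw [smul_mulVec, LinearMap.toMatrix'_mulVec]
    change c • e w = _
    rw [hw, ← Pi.single_smul, smul_eq_mul, mul_comm, h2]

/-- bordered matrix -/
def bord {m n : ℕ} (a : R) (r : Fin n → R) (M : Matrix (Fin m) (Fin n) R) :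
    Matrix (Fin (m + 1)) (Fin (n + 1)) R :=
  Matrix.of (Fin.cons (Fin.cons a r) (fun i => Fin.cons 0 (M i)))

@[simp] lemma bord00 {m n : ℕ} (a : R) (r : Fin n → R) (M : Matrix (Fin m) (Fin n) R) :
    bord a r M 0 0 = a := rfl
@[simp] lemma bord0s {m n : ℕ} (a : R) (r : Fin n → R) (M : Matrix (Fin m) (Fin n) R) (j) :
    bord a r M 0 (Fin.succ j) = r j := rfl
@[simp] lemma bords0 {m n : ℕ} (a : R) (r : Fin n → R) (M : Matrix (Fin m) (Fin n) R) (i) :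
    bord a r M (Fin.succ i) 0 = 0 := rfl
@[simp] lemma bordss {m n : ℕ} (a : R) (r : Fin n → R) (M : Matrix (Fin m) (Fin n) R) (i j) :
    bord a r M (Fin.succ i) (Fin.succ j) = M i j := rfl

lemma bord_mul {m n k : ℕ} (a b : R) (r : Fin n → R) (s : Fin k → R)
    (M : Matrix (Fin m) (Fin n) R) (N : Matrix (Fin n) (Fin k) R) :
    bord a r M * bord b s N = bord (a * b) (a • s + r ᵥ* N) (M * N) := by
  ext i j
  refine Fin.cases ?_ (fun i => ?_) i <;> refine Fin.cases ?_ (fun j => ?_) j <;>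
    simp [Matrix.mul_apply, Fin.sum_univ_succ, vecMul, dotProduct]

lemma bord_one {n : ℕ} : bord 1 0 (1 : Matrix (Fin n) (Fin n) R) = 1 := by
  ext i j
  refine Fin.cases ?_ (fun i => ?_) i <;> refine Fin.cases ?_ (fun j => ?_) j <;>
    simp [Matrix.one_apply, Fin.succ_ne_zero, (Fin.succ_ne_zero _).symm]

lemma bord_unit {n : ℕ} (r : Fin n → R) {M : Matrix (Fin n) (Fin n) R} (hM : IsUnit M) :
    IsUnit (bord 1 r M) := by
  obtain ⟨N, hN⟩ := hM.exists_right_inv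
  refine IsUnit.of_mul_eq_one (bord 1 (-(r ᵥ* N)) N) ?_
  rw [bord_mul, hN, ← bord_one]
  simp

lemma diag_of_equiv {m n : ℕ} {A B : Matrix (Fin m) (Fin n) R}
    {P : Matrix (Fin m) (Fin m) R} {Q : Matrix (Fin n) (Fin n) R} (hP : IsUnit P) (hQ : IsUnit Q)
    (hB : P * A * Q = B) (h : DiagonalReduction B) : DiagonalReduction A := by
  obtain ⟨P', Q', hP', hQ', h1, h2⟩ := h
  subst hB
  have e : P' * P * A * (Q * Q') = P' * (P * A * Q) * Q' := by simp only [Matrix.mul_assoc]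
  refine ⟨P' * P, Q * Q', hP'.mul hP, hQ.mul hQ', ?_, ?_⟩
  · rw [e]; exact h1
  · rw [e]; exact h2

lemma diag_bord {m n : ℕ} (d : R) (C : Matrix (Fin m) (Fin n) R)
    (h : DiagonalReduction (d • C)) : DiagonalReduction (bord d 0 (d • C)) := by
  obtain ⟨P, Q, hP, hQ, h1, h2⟩ := h
  have e : bord 1 0 P * bord d 0 (d • C) * bord 1 0 Q = bord d 0 (P * (d • C) * Q) := by
    rw [bord_mul, bord_mul]; simp
  refine ⟨bord 1 0 P, bord 1 0 Q, bord_unit 0 hP, bord_unit 0 hQ, ?_, ?_⟩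
  · rw [e]
    intro i j
    refine Fin.cases ?_ (fun i => ?_) i <;> refine Fin.cases ?_ (fun j => ?_) j
    · simp
    · simp
    · simp
    · intro hij
      rw [bordss]
      exact h1 i j (by simpa using hij)
  · rw [e]
    intro i i' j j' hij hij' hii
    obtain ⟨i', rfl⟩ := Fin.exists_succ_eq.2 (show i' ≠ 0 by rintro rfl; simp at hii)
    obtain ⟨j', rfl⟩ := Fin.exists_succ_eq.2 (show j' ≠ 0 by rintro rfl; simp at hij')
    rw [bordss]
    revert hij hii
    refine Fin.cases ?_ (fun i => ?_) i <;> refine Fin.cases ?_ (fun j => ?_) j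
    · intro _ _
      rw [bord00, Matrix.mul_smul, Matrix.smul_mul]
      exact ⟨_, rfl⟩
    · simp
    · simp
    · intro hij hii
      rw [bordss]
      refine h2 i i' j j' ?_ ?_ ?_
      · simpa using hij
      · simpa using hij'
      · simpa using hii

lemma main (h : LocallyStable R) (H : Herm R) (m : ℕ) :
    ∀ (n : ℕ) (A : Matrix (Fin m) (Fin n) R), DiagonalReduction A := by
  induction m with
  | zero =>
    intro n A
    exact ⟨1, 1, isUnit_one, isUnit_one, fun i => i.elim0, fun i => i.elim0⟩
  | succ m ih =>
    intro n A
    cases n with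
    | zero => exact ⟨1, 1, isUnit_one, isUnit_one, fun _ j => j.elim0, fun _ _ j => j.elim0⟩
    | succ n =>
      obtain ⟨d, g, x, hg, hx⟩ := factor H (fun ij : Fin (m + 1) × Fin (n + 1) => A ij.1 ij.2)
        Finset.univ Finset.univ_nonempty
      set A' : Matrix (Fin (m + 1)) (Fin (n + 1)) R := Matrix.of fun i j => g (i, j) with hA'
      have hA : A = d • A' := by
        ext i j
        exact hg (i, j) (Finset.mem_univ _)
      obtain ⟨u, v, huv⟩ := vals h H A' Finset.univ
      have hunit : IsUnit (u ⬝ᵥ (A' *ᵥ v)) := by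
        rw [isUnit_iff_dvd_one, ← hx]
        exact Finset.dvd_sum fun i _ => (huv i (Finset.mem_univ _)).mul_left _
      obtain ⟨k, hk⟩ := hunit.exists_left_inv
      obtain ⟨P, hP, hP1⟩ := complete H (A' *ᵥ v) (k • u) (by simpa using hk)
      obtain ⟨Q, hQ, hQ1⟩ := complete H v (k • (u ᵥ* A')) (by
        rw [smul_dotProduct, ← dotProduct_mulVec]; simpa using hk)
      obtain ⟨Q', hQ'⟩ := hQ.exists_left_inv
      have hQ'u : IsUnit Q' := by
        refine IsUnit.of_mul_eq_one Q hQ'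
      have hv : Q' *ᵥ Pi.single 0 1 = v := by
        rw [← hQ1, mulVec_mulVec, hQ', one_mulVec]
      have hcol : ∀ i, (P * A' * Q') i 0 = (Pi.single 0 1 : Fin (m + 1) → R) i := by
        intro i
        have : (P * A' * Q') *ᵥ Pi.single 0 1 = Pi.single 0 1 := by
          rw [← mulVec_mulVec, hv, ← mulVec_mulVec, hP1]
        rw [← this]; simp
      set A1 := P * A' * Q' with hA1
      set r : Fin n → R := fun j => A1 0 j.succ
      set C : Matrix (Fin m) (Fin n) R := Matrix.of fun i j => A1 i.succ j.succ
      have hb : A1 = bord 1 r C := by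
        ext i j
        refine Fin.cases ?_ (fun i => ?_) i <;> refine Fin.cases ?_ (fun j => ?_) j
        · rw [hcol]; simp
        · rfl
        · rw [hcol]; simp
        · rfl
      refine diag_of_equiv (P := P) (Q := Q' * bord 1 (-r) 1) hP
        (hQ'u.mul (bord_unit _ isUnit_one)) (B := bord d 0 (d • C)) ?_ (diag_bord d C (ih _ _))
      rw [hA, Matrix.mul_smul, Matrix.smul_mul, ← Matrix.mul_assoc, ← hA1, hb, bord_mul]
      ext i j
      refine Fin.cases ?_ (fun i => ?_) i <;> refine Fin.cases ?_ (fun j => ?_) j <;> simp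

lemma bezout_of_edr (h : ElementaryDivisorRing R) : IsBezout R := by
  rw [IsBezout.iff_span_pair_isPrincipal]
  intro x y
  obtain ⟨P, Q, hP, hQ, h1, -⟩ := h 1 2 !![x, y]
  obtain ⟨P', hP'⟩ := hP.exists_left_inv
  obtain ⟨Q', hQ'⟩ := hQ.exists_right_inv
  set D := P * !![x, y] * Q with hD
  have hA : !![x, y] = P' * D * Q' := by
    rw [hD, Matrix.mul_assoc, Matrix.mul_assoc, hQ', Matrix.mul_one, ← Matrix.mul_assoc, hP',
      Matrix.one_mul]
  have h01 : D 0 1 = 0 := h1 0 1 (by simp)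
  have hx : x = P' 0 0 * D 0 0 * Q' 0 0 := by
    have := congrFun (congrFun hA 0) 0
    simpa [Matrix.mul_apply, Fin.sum_univ_two, h01] using this
  have hy : y = P' 0 0 * D 0 0 * Q' 0 1 := by
    have := congrFun (congrFun hA 0) 1
    simpa [Matrix.mul_apply, Fin.sum_univ_two, h01] using this
  have hd : D 0 0 = P 0 0 * x * Q 0 0 + P 0 0 * y * Q 1 0 := by
    simp [hD, Matrix.mul_apply, Fin.sum_univ_two]
  refine ⟨D 0 0, le_antisymm ?_ ?_⟩
  · rw [Ideal.span_le]
    rintro z (rfl | rfl)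
    · exact Ideal.mem_span_singleton.2 ⟨P' 0 0 * Q' 0 0, by linear_combination hx⟩
    · exact Ideal.mem_span_singleton.2 ⟨P' 0 0 * Q' 0 1, by linear_combination hy⟩
  · refine (Ideal.span_singleton_le_iff_mem _).2 (Ideal.mem_span_pair.2
      ⟨P 0 0 * Q 0 0, P 0 0 * Q 1 0, by linear_combination -hd⟩)

end LS

/-- A locally stable commutative ring is an elementary divisor ring iff it is Bézout. -/
theorem stmt_9 (R : Type) [CommRing R] (h : LocallyStable R) :
    ElementaryDivisorRing R ↔ IsBezout R := by
  exact ⟨fun hE => LS.bezout_of_edr hE,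
    fun _ m n A => LS.main h (LS.herm h) m n A⟩
end

section
/- Let R be a Bézout commutative ring such that R/aR is a VNL ring for every a ∉ J(R). Then for any n×n matrix A over R there exist P ∈ GE_n(R) and Q ∈ GL_n(R) such that PAQ = diag(ε_1,...,ε_n) with ε_i dividing ε_{i+1}. -/
open Matrix

theorem sr1_aux (R : Type) [CommRing R]
    (h : ∀ a : R, a ∉ Ideal.jacobson (⊥ : Ideal R) →
      IsVNLRing (R ⧸ Ideal.span ({a} : Set R))) : StableRange1 R := by
  intro a b hab
  have key1 : ∀ z : R, a = a ^ 2 * z → ∃ y : R, IsUnit (a + b * y) := by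
    intro z hz
    obtain ⟨x, y, hxy⟩ := hab
    refine ⟨y * (1 - a * z), IsUnit.of_mul_eq_one (a * z * z + (1 - a * z)) ?_⟩
    have h1 : b * (y * (1 - a * z)) = 1 - a * z := by
      linear_combination (1 - a * z) * hxy - x * hz
    rw [h1]
    grind
  have key2 : ∀ z : R, b = b ^ 2 * z → ∃ y : R, IsUnit (a + b * y) := by
    intro z hz
    obtain ⟨x, y, hxy⟩ := hab
    refine ⟨z * (1 - a), IsUnit.of_mul_eq_one ((1 - b * z) * x + b * z) ?_⟩
    have h1 : (1 - b * z) * (a * x) = 1 - b * z := by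
      linear_combination (1 - b * z) * hxy - y * hz
    have h2 : (b * z) * (b * z) = b * z := by linear_combination -z * hz
    grind
  by_cases hJ : a ^ 2 * b ^ 2 ∈ Ideal.jacobson (⊥ : Ideal R)
  · refine ⟨1, ?_⟩
    by_contra hu
    obtain ⟨m, hm, hmem⟩ := exists_max_ideal_of_mem_nonunits hu
    have hm' : a ^ 2 * b ^ 2 ∈ m := by
      have := (Ideal.mem_jacobson_iff.mp hJ)
      rw [Ideal.jacobson, Ideal.mem_sInf] at hJ
      exact hJ ⟨bot_le, hm⟩
    have hp := hm.isPrime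
    obtain ⟨x, y, hxy⟩ := hab
    have hone : a ∈ m → b ∈ m → False := fun h1 h2 => hp.ne_top
      ((Ideal.eq_top_iff_one m).mpr (hxy ▸ m.add_mem (m.mul_mem_left x h1) (m.mul_mem_left y h2)))
    rw [mul_one] at hmem
    rcases hp.mem_or_mem hm' with h1 | h1
    · have h1 := hp.mem_of_pow_mem _ h1
      exact hone h1 ((Ideal.add_mem_iff_right m h1).mp hmem)
    · have h1 := hp.mem_of_pow_mem _ h1
      exact hone ((Ideal.add_mem_iff_left m h1).mp hmem) h1
  · obtain ⟨p, q, hpq⟩ : IsCoprime (a ^ 2) (b ^ 2) := hab.pow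
    rcases h _ hJ (Ideal.Quotient.mk _ (a * (q * b ^ 2) + (1 - b) * (p * a ^ 2))) with ⟨y, hy⟩ | ⟨y, hy⟩
    · obtain ⟨y, rfl⟩ := Ideal.Quotient.mk_surjective y
      rw [← map_mul, ← map_mul, Ideal.Quotient.eq, Ideal.mem_span_singleton] at hy
      obtain ⟨c, hc⟩ := hy
      have : a ^ 2 ∣ a := by
        have hx : a * (q * b ^ 2) + (1 - b) * (p * a ^ 2) = a + a ^ 2 * (p * (1 - b - a)) := by
          linear_combination a * hpq
        rw [hx] at hc
        refine ⟨b ^ 2 * c - (p * (1 - b - a)) + y * (1 + a * (p * (1 - b - a))) ^ 2, ?_⟩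
        linear_combination hc
      obtain ⟨z, hz⟩ := this
      exact key1 z hz
    · obtain ⟨y, rfl⟩ := Ideal.Quotient.mk_surjective y
      rw [← map_one (Ideal.Quotient.mk _), ← map_sub, ← map_mul, ← map_mul, Ideal.Quotient.eq,
        Ideal.mem_span_singleton] at hy
      obtain ⟨c, hc⟩ := hy
      have : b ^ 2 ∣ b := by
        have hx : 1 - (a * (q * b ^ 2) + (1 - b) * (p * a ^ 2)) = b + b ^ 2 * (q * (1 - b - a)) := by
          linear_combination -(1 - b) * hpq
        rw [hx] at hc
        refine ⟨a ^ 2 * c - (q * (1 - b - a)) + y * (1 + b * (q * (1 - b - a))) ^ 2, ?_⟩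
        linear_combination hc
      obtain ⟨z, hz⟩ := this
      exact key2 z hz

def GcdProp (R : Type) [CommRing R] : Prop :=
  ∀ a b : R, ∃ t : R, (a + t * b) ∣ a ∧ (a + t * b) ∣ b

theorem gcdProp_of (R : Type) [CommRing R] [IsBezout R] (hs : StableRange1 R) : GcdProp R := by
  intro a b
  obtain ⟨d, hd⟩ := IsBezout.span_pair_isPrincipal a b
  have hd' : Ideal.span {a, b} = Ideal.span {d} := hd
  obtain ⟨a0, ha⟩ : d ∣ a := Ideal.mem_span_singleton.mp (hd' ▸ Ideal.subset_span (by simp))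
  obtain ⟨b0, hb⟩ : d ∣ b := Ideal.mem_span_singleton.mp (hd' ▸ Ideal.subset_span (by simp))
  have : d ∈ Ideal.span {a, b} := hd' ▸ Ideal.mem_span_singleton_self d
  obtain ⟨x, y, hxy⟩ := Ideal.mem_span_pair.mp this
  obtain ⟨z, hz⟩ := hs a0 (b0 * y + (1 - a0 * x - b0 * y)) ⟨x, 1, by ring⟩
  have e : a + y * z * b = d * (a0 + (b0 * y + (1 - a0 * x - b0 * y)) * z) := by
    linear_combination (1 - x * z) * ha + z * hxy
  have hdv : (a + y * z * b) ∣ d := by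
    rw [e]; exact hz.mul_right_dvd.mpr dvd_rfl
  exact ⟨y * z, hdv.trans ⟨a0, ha⟩, hdv.trans ⟨b0, hb⟩⟩

section Red
variable {R : Type} [CommRing R]

/-- One elementary row or column operation. -/
def ElStep {n : ℕ} (A B : Matrix (Fin n) (Fin n) R) : Prop :=
  ∃ i j : Fin n, i ≠ j ∧ ∃ c : R,
    (∀ k l, B k l = A k l + if k = i then c * A j l else 0) ∨
    (∀ k l, B k l = A k l + if l = i then c * A k j else 0)

def Reach {n : ℕ} : Matrix (Fin n) (Fin n) R → Matrix (Fin n) (Fin n) R → Prop :=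
  Relation.ReflTransGen ElStep

theorem ElStep.transpose {n : ℕ} {A B : Matrix (Fin n) (Fin n) R} (h : ElStep A B) :
    ElStep Aᵀ Bᵀ := by
  obtain ⟨i, j, hij, c, h | h⟩ := h
  · exact ⟨i, j, hij, c, Or.inr fun k l => h l k⟩
  · exact ⟨i, j, hij, c, Or.inl fun k l => h l k⟩

theorem Reach.transpose {n : ℕ} {A B : Matrix (Fin n) (Fin n) R} (h : Reach A B) :
    Reach Aᵀ Bᵀ := by
  induction h with
  | refl => exact .refl
  | tail _ h ih => exact ih.tail h.transpose

theorem Reach.dvd {n : ℕ} {A B : Matrix (Fin n) (Fin n) R} (h : Reach A B) (g : R)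
    (hg : ∀ i j, g ∣ A i j) : ∀ i j, g ∣ B i j := by
  induction h with
  | refl => exact hg
  | tail _ h ih =>
    obtain ⟨i, j, hij, c, h | h⟩ := h <;> intro k l <;> rw [h] <;> split_ifs <;>
      simp [dvd_add, ih, Dvd.dvd.mul_left]

theorem Reach.exists_mul {n : ℕ} {A B : Matrix (Fin n) (Fin n) R} (h : Reach A B) :
    ∃ P Q : GL (Fin n) R, P ∈ GE n R ∧
      (P : Matrix (Fin n) (Fin n) R) * A * (Q : Matrix (Fin n) (Fin n) R) = B := by
  induction h with
  | refl => exact ⟨1, 1, one_mem _, by simp⟩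
  | @tail B C _ h ih =>
    obtain ⟨P, Q, hP, hPQ⟩ := ih
    have mk : ∀ (i j : Fin n), i ≠ j → ∀ c : R,
        ∃ T : GL (Fin n) R, (T : Matrix (Fin n) (Fin n) R) = Matrix.transvection i j c := by
      intro i j hij c
      refine ⟨⟨Matrix.transvection i j c, Matrix.transvection i j (-c), ?_, ?_⟩, rfl⟩ <;>
        simp [Matrix.transvection_mul_transvection_same, hij]
    obtain ⟨i, j, hij, c, h | h⟩ := h
    · obtain ⟨T, hT⟩ := mk i j hij c
      refine ⟨T * P, Q, mul_mem (Subgroup.subset_closure ⟨⟨i, j, hij, c⟩, hT⟩) hP, ?_⟩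
      have : C = Matrix.transvection i j c * B := by
        ext k l
        rw [h]
        split_ifs with hk
        · subst hk; simp
        · simp [hk]
      rw [this, ← hPQ, ← hT]
      simp [Matrix.mul_assoc]
    · obtain ⟨T, hT⟩ := mk j i hij.symm c
      refine ⟨P, Q * T, hP, ?_⟩
      have : C = B * Matrix.transvection j i c := by
        ext k l
        rw [h]
        split_ifs with hk
        · subst hk; simp
        · simp [hk]
      rw [this, ← hPQ, ← hT]
      simp [Matrix.mul_assoc]

/-- Replace row `i` by adding multiples of other rows, to get a gcd of column `k`. -/
theorem gcd_col {n : ℕ} (hR : GcdProp R) (A : Matrix (Fin n) (Fin n) R) (i k : Fin n) :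
    ∃ A', Reach A A' ∧ (∀ j, j ≠ i → ∀ b, A' j b = A j b) ∧
      (∀ j, A' i k ∣ A' j k) ∧
      (∀ b, (∀ j, j ≠ i → A j b = 0) → A' i b = A i b) ∧
      (∀ b g, (∀ j, g ∣ A j b) → g ∣ A' i b) := by
  have key : ∀ s : Finset (Fin n), ∃ A', Reach A A' ∧ (∀ j, j ≠ i → ∀ b, A' j b = A j b) ∧
      (∀ j ∈ s, A' i k ∣ A' j k) ∧
      (∀ b, (∀ j, j ≠ i → A j b = 0) → A' i b = A i b) ∧
      (∀ b g, (∀ j, g ∣ A j b) → g ∣ A' i b) := by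
    intro s
    induction s using Finset.induction_on with
    | empty => exact ⟨A, .refl, by simp, by simp, by simp, fun b g h => h i⟩
    | insert a s _ ih =>
      obtain ⟨A', h1, h2, h3, h4, h5⟩ := ih
      by_cases hai : a = i
      · refine ⟨A', h1, h2, ?_, h4, h5⟩
        intro j hj
        rcases Finset.mem_insert.mp hj with rfl | hj
        · rw [hai]
        · exact h3 j hj
      · obtain ⟨t, ht1, ht2⟩ := hR (A' i k) (A' a k)
        let A'' : Matrix (Fin n) (Fin n) R :=
          fun x l => A' x l + if x = i then t * A' a l else 0
        have e1 : ∀ l, A'' i l = A' i l + t * A' a l := fun l => by simp [A'']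
        have e2 : ∀ x, x ≠ i → ∀ l, A'' x l = A' x l := fun x hx l => by simp [A'', hx]
        refine ⟨A'', h1.tail ⟨i, a, Ne.symm hai, t, Or.inl fun _ _ => rfl⟩, ?_, ?_, ?_, ?_⟩
        · intro j hj b
          rw [e2 j hj, h2 j hj]
        · intro j hj
          by_cases hji : j = i
          · rw [hji]
          rw [e1, e2 j hji]
          rcases Finset.mem_insert.mp hj with rfl | hj
          · exact ht2
          · exact ht1.trans (h3 j hj)
        · intro b hb
          rw [e1, h4 b hb, h2 a hai, hb a hai]; simp
        · intro b g hg
          rw [e1, h2 a hai]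
          exact dvd_add (h5 b g hg) ((hg a).mul_left t)
  obtain ⟨A', h1, h2, h3, h4, h5⟩ := key Finset.univ
  exact ⟨A', h1, h2, fun j => h3 j (Finset.mem_univ j), h4, h5⟩

theorem clear_col {n : ℕ} (A : Matrix (Fin n) (Fin n) R) (i k : Fin n)
    (hd : ∀ j, A i k ∣ A j k) :
    ∃ A', Reach A A' ∧ (∀ b, A' i b = A i b) ∧ (∀ j, j ≠ i → A' j k = 0) := by
  have key : ∀ s : Finset (Fin n), ∃ A', Reach A A' ∧ (∀ b, A' i b = A i b) ∧
      (∀ j, j ≠ i → j ∈ s → A' j k = 0) ∧ (∀ j, j ∉ s → A' j k = A j k) := by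
    intro s
    induction s using Finset.induction_on with
    | empty => exact ⟨A, .refl, by simp, by simp, by simp⟩
    | insert a s has ih =>
      obtain ⟨A', h1, h2, h3, h4⟩ := ih
      by_cases hai : a = i
      · refine ⟨A', h1, h2, ?_, fun j hj => h4 j (by simp at hj; exact hj.2)⟩
        intro j hj hjs
        rcases Finset.mem_insert.mp hjs with rfl | hjs
        · exact absurd hai hj
        · exact h3 j hj hjs
      · obtain ⟨t, ht⟩ := hd a
        let A'' : Matrix (Fin n) (Fin n) R :=
          fun x l => A' x l + if x = a then (-t) * A' i l else 0
        have e1 : ∀ l, A'' a l = A' a l + (-t) * A' i l := fun l => by simp [A'']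
        have e2 : ∀ x, x ≠ a → ∀ l, A'' x l = A' x l := fun x hx l => by simp [A'', hx]
        refine ⟨A'', h1.tail ⟨a, i, hai, -t, Or.inl fun _ _ => rfl⟩, ?_, ?_, ?_⟩
        · intro b
          rw [e2 i (Ne.symm hai), h2]
        · intro j hj hjs
          by_cases hja : j = a
          · rw [hja, e1, h4 a has, h2, ht]; ring
          · rw [e2 j hja]
            exact h3 j hj ((Finset.mem_insert.mp hjs).resolve_left hja)
        · intro j hj
          simp only [Finset.mem_insert, not_or] at hj
          rw [e2 j hj.1, h4 j hj.2]
  obtain ⟨A', h1, h2, h3, h4⟩ := key Finset.univ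
  exact ⟨A', h1, h2, fun j hj => h3 j hj (Finset.mem_univ j)⟩

theorem clear_row {n : ℕ} (A : Matrix (Fin n) (Fin n) R) (i k : Fin n)
    (hd : ∀ j, A k i ∣ A k j) :
    ∃ A', Reach A A' ∧ (∀ b, A' b i = A b i) ∧ (∀ j, j ≠ i → A' k j = 0) := by
  obtain ⟨B, h1, h2, h3⟩ := clear_col Aᵀ i k hd
  exact ⟨Bᵀ, h1.transpose, h2, h3⟩

theorem Reach.lift {n : ℕ} {B B' : Matrix (Fin n) (Fin n) R} (h : Reach B B')
    (A : Matrix (Fin (n + 1)) (Fin (n + 1)) R) (hA : ∀ i j, A (Fin.succ i) (Fin.succ j) = B i j)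
    (h0 : ∀ j, A 0 (Fin.succ j) = 0) :
    ∃ A', Reach A A' ∧ (∀ i j, A' (Fin.succ i) (Fin.succ j) = B' i j) ∧
      (∀ j, A' 0 (Fin.succ j) = 0) ∧ A' 0 0 = A 0 0 ∧
      ((∀ j, A (Fin.succ j) 0 = 0) → ∀ j, A' (Fin.succ j) 0 = 0) := by
  induction h with
  | refl => exact ⟨A, .refl, hA, h0, rfl, id⟩
  | tail _ h ih =>
    obtain ⟨A', h1, h2, h3, h4, h5⟩ := ih
    obtain ⟨i, j, hij, c, h | h⟩ := h
    · refine ⟨fun x l => A' x l + if x = i.succ then c * A' j.succ l else 0,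
        h1.tail ⟨i.succ, j.succ, by simpa using hij, c, Or.inl fun _ _ => rfl⟩, ?_, ?_, ?_, ?_⟩
      · intro x l
        simp [h, h2]
      · intro l
        simp [h3, (Fin.succ_ne_zero i).symm]
      · simp [h4, (Fin.succ_ne_zero i).symm]
      · intro hz x
        simp [h5 hz]
    · refine ⟨fun x l => A' x l + if l = i.succ then c * A' x j.succ else 0,
        h1.tail ⟨i.succ, j.succ, by simpa using hij, c, Or.inr fun _ _ => rfl⟩, ?_, ?_, ?_, ?_⟩
      · intro x l
        simp [h, h2]
      · intro l
        simp [h3]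
      · simp [h4, (Fin.succ_ne_zero i).symm]
      · intro hz x
        simp [h5 hz, (Fin.succ_ne_zero i).symm]

theorem diag_red (hR : GcdProp R) (n : ℕ) : ∀ A : Matrix (Fin n) (Fin n) R,
    ∃ d : Fin n → R, Reach A (Matrix.diagonal d) ∧ ∀ i j : Fin n, i ≤ j → d i ∣ d j := by
  induction n with
  | zero => exact fun A => ⟨fun _ => 0, by
      rw [Subsingleton.elim A (Matrix.diagonal _)]; exact .refl, fun i => i.elim0⟩
  | succ n ih =>
    intro A
    -- it suffices to reach a matrix whose corner divides everything
    suffices hs : ∃ A', Reach A A' ∧ ∀ i j, A' 0 0 ∣ A' i j by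
      obtain ⟨A1, r1, d1⟩ := hs
      obtain ⟨A2, r2, e2, z2⟩ := clear_col A1 0 0 (fun j => d1 j 0)
      have d2 := r2.dvd _ d1
      obtain ⟨A3, r3, e3, z3⟩ := clear_row A2 0 0 (fun j => by rw [e2]; exact d2 0 j)
      have d3 := r3.dvd _ d2
      obtain ⟨d, rd, hd⟩ := ih (fun i j => A3 i.succ j.succ)
      obtain ⟨A4, r4, s4, z4, e4, c4⟩ := rd.lift A3 (fun _ _ => rfl)
        (fun j => z3 _ (Fin.succ_ne_zero j))
      have d4 := r4.dvd _ d3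
      have c4 := c4 (fun j => by rw [e3, z2 _ (Fin.succ_ne_zero j)])
      have heq : A4 = Matrix.diagonal (Fin.cons (A1 0 0) d : Fin (n + 1) → R) := by
        ext i j
        refine Fin.cases ?_ (fun i => ?_) i <;> refine Fin.cases ?_ (fun j => ?_) j
        · simp [e4, e3, e2]
        · rw [z4, Matrix.diagonal_apply_ne _ (Fin.succ_ne_zero j).symm]
        · rw [c4, Matrix.diagonal_apply_ne _ (Fin.succ_ne_zero i)]
        · rw [s4]; simp [Matrix.diagonal_apply]
      refine ⟨Fin.cons (A1 0 0) d, ?_, ?_⟩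
      · rw [← heq]
        exact ((r1.trans r2).trans r3).trans r4
      · intro i j
        refine Fin.cases ?_ (fun i => ?_) i <;> refine Fin.cases ?_ (fun j => ?_) j
        · simp
        · intro _
          have := d4 j.succ j.succ
          rw [s4] at this
          simpa using this
        · intro hij; exact absurd hij (by simp)
        · intro hij
          simpa using hd i j (by simpa using hij)
    cases n with
    | zero =>
      refine ⟨A, .refl, fun i j => ?_⟩
      rw [Fin.fin_one_eq_zero i, Fin.fin_one_eq_zero j]
    | succ n =>
      obtain ⟨B, rB, _, dB, _⟩ := gcd_col hR Aᵀ 0 0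
      obtain ⟨A1, r1, e1, z1⟩ := clear_row Bᵀ 0 0 dB
      obtain ⟨d, rd, hd⟩ := ih (fun i j => A1 i.succ j.succ)
      obtain ⟨A2, r2, s2, z2, _, _⟩ := rd.lift A1 (fun _ _ => rfl)
        (fun j => z1 _ (Fin.succ_ne_zero j))
      have dd2 : ∀ (l : Fin (n + 1)) (j : Fin (n + 2)), d 0 ∣ A2 j l.succ := by
        intro l j
        refine Fin.cases ?_ (fun j => ?_) j
        · rw [z2]; exact dvd_zero _
        · rw [s2, Matrix.diagonal_apply]
          split_ifs
          · exact hd 0 j (Fin.zero_le _)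
          · exact dvd_zero _
      let o : Fin (n + 2) := Fin.succ 0
      have ho : o ≠ 0 := Fin.succ_ne_zero 0
      obtain ⟨A3, r3, e3, g3, k3, p3⟩ := gcd_col hR A2 o 0
      have h11 : A3 o o = d 0 := by
        rw [k3]
        · exact (s2 0 0).trans (Matrix.diagonal_apply_eq _ _)
        · intro j
          refine Fin.cases ?_ (fun j => ?_) j
          · intro _; exact z2 0
          · intro hj
            have : j ≠ 0 := fun h => hj (by rw [h])
            exact (s2 j 0).trans (Matrix.diagonal_apply_ne _ this)
      have dd3 : ∀ (l : Fin (n + 1)) (j : Fin (n + 2)), d 0 ∣ A3 j l.succ := by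
        intro l j
        by_cases hj : j = o
        · rw [hj]; exact p3 _ _ (dd2 l)
        · rw [e3 j hj]; exact dd2 l j
      obtain ⟨t, ht1, ht2⟩ := hR (A3 o 0) (A3 o o)
      have dall : ∀ i j, (A3 o 0 + t * A3 o o) ∣ A3 i j := by
        intro i j
        refine Fin.cases ?_ (fun j => ?_) j
        · exact ht1.trans (g3 i)
        · exact ht2.trans (by rw [h11]; exact dd3 j i)
      generalize hg : A3 o 0 + t * A3 o o = g at dall
      let A4 : Matrix (Fin (n + 2)) (Fin (n + 2)) R :=
        fun x l => A3 x l + if l = 0 then t * A3 x o else 0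
      have r4 : Reach A3 A4 :=
        Relation.ReflTransGen.single ⟨0, o, ho.symm, t, Or.inr fun _ _ => rfl⟩
      have d4 := r4.dvd _ dall
      have e4 : A4 o 0 = g := by simp [A4, hg]
      obtain ⟨x, hx⟩ := d4 0 0
      let A5 : Matrix (Fin (n + 2)) (Fin (n + 2)) R :=
        fun y l => A4 y l + if y = 0 then (1 - x) * A4 o l else 0
      have r5 : Reach A4 A5 :=
        Relation.ReflTransGen.single ⟨0, o, ho.symm, 1 - x, Or.inl fun _ _ => rfl⟩
      have d5 := r5.dvd _ d4
      have e5 : A5 0 0 = g := by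
        have : A5 0 0 = A4 0 0 + (1 - x) * A4 o 0 := by simp [A5]
        rw [this, hx, e4]; ring
      refine ⟨A5, ?_, by rw [e5]; exact d5⟩
      have rB' : Reach A Bᵀ := rB.transpose
      exact ((((rB'.trans r1).trans r2).trans r3).trans r4).trans r5

end Red

/-- If `R` is Bézout and `R/aR` is VNL for every `a ∉ J(R)`, then every square
matrix admits reduction by `P ∈ GEₙ(R)`, `Q ∈ GLₙ(R)` to `diag(ε₁,…,εₙ)` with
`εᵢ ∣ εᵢ₊₁`. -/
theorem stmt_14 (R : Type) [CommRing R] [IsBezout R]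
    (h : ∀ a : R, a ∉ Ideal.jacobson (⊥ : Ideal R) →
      IsVNLRing (R ⧸ Ideal.span ({a} : Set R)))
    (n : ℕ) (A : Matrix (Fin n) (Fin n) R) :
    ∃ (P Q : GL (Fin n) R), P ∈ GE n R ∧
      ∃ d : Fin n → R,
        (P : Matrix (Fin n) (Fin n) R) * A * (Q : Matrix (Fin n) (Fin n) R)
          = Matrix.diagonal d ∧
        ∀ i j : Fin n, (i : ℕ) + 1 = (j : ℕ) → d i ∣ d j := by
  obtain ⟨d, hr, hd⟩ := diag_red (gcdProp_of R (sr1_aux R h)) n A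
  obtain ⟨P, Q, hP, hPQ⟩ := hr.exists_mul
  exact ⟨P, Q, hP, d, hPQ, fun i j hij => hd i j (by rw [Fin.le_def]; omega)⟩
end
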